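/- Let ψ: h̄⊗A → ℂ be linear and suppose the irreducible highest weight module V(ψ) is an integrable 𝔏(A)-module. Then there exists a cofinite ideal I of A such that ψ(d₀⊗I) = 0, ψ(C⊗I) = 0, and ψ((h̊ ⊕ ℂK)⊗√I) = 0, where √I is the radical of I. -/

import Mathlib

noncomputable section

/-!
Common setup: a realization of the loop affine-Virasoro algebra
`𝔏(A) = ((g̊ ⊗ ℂ[t,t⁻¹] ⊕ ℂK) ⋊ Vir) ⊗ A`.

* `g` plays the role of the finite dimensional simple Lie algebra `g̊`.
* `A` is a commutative associative unital `ℂ`-algebra.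
* `L` plays the role of `𝔏(A)`; the structure fields record the generators
  `E n x a = (x ⊗ tⁿ) ⊗ a`, `D n a = dₙ ⊗ a`, `K a = K ⊗ a`, `C a = C ⊗ a`
  together with the defining bracket relations, and the fact that the
  generators span `L`.
-/

/-- An ideal of a `ℂ`-algebra is cofinite if the quotient is finite dimensional. -/
def IsCofiniteIdeal {A : Type*} [CommRing A] [Algebra ℂ A] (I : Ideal A) : Prop :=
  FiniteDimensional ℂ (A ⧸ I)

/-- A realization of the loop affine-Virasoro algebra `𝔏(A)`. -/
structure LoopAffVir (g : Type*) [LieRing g] [LieAlgebra ℂ g]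
    (A : Type*) [CommRing A] [Algebra ℂ A]
    (L : Type*) [LieRing L] [LieAlgebra ℂ L] : Type _ where
  /-- the Cartan subalgebra `h̊` of `g̊` -/
  H : LieSubalgebra ℂ g
  isCartan : H.IsCartanSubalgebra
  /-- the invariant nondegenerate symmetric bilinear form on `g̊` -/
  form : g →ₗ[ℂ] g →ₗ[ℂ] ℂ
  form_symm : ∀ x y : g, form x y = form y x
  form_nondeg : ∀ x : g, (∀ y : g, form x y = 0) → x = 0
  form_invariant : ∀ x y z : g, form ⁅x, y⁆ z = form x ⁅y, z⁆
  /-- the root space `g̊_α` -/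
  rootSp : Module.Dual ℂ H → Submodule ℂ g
  rootSp_def : ∀ (α : Module.Dual ℂ H) (x : g),
      x ∈ rootSp α ↔ ∀ h : H, ⁅(h : g), x⁆ = α h • x
  /-- a choice of positive roots `Δ̊₊` -/
  Δplus : Set (Module.Dual ℂ H)
  Δplus_root : ∀ α ∈ Δplus, α ≠ 0 ∧ rootSp α ≠ ⊥
  Δplus_cover : ∀ α : Module.Dual ℂ H, α ≠ 0 → rootSp α ≠ ⊥ → α ∈ Δplus ∨ -α ∈ Δplus
  Δplus_disj : ∀ α ∈ Δplus, -α ∉ Δplus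
  /-- `E n x a = (x ⊗ tⁿ) ⊗ a` -/
  E : ℤ → g →ₗ[ℂ] A →ₗ[ℂ] L
  /-- `D n a = dₙ ⊗ a` -/
  D : ℤ → A →ₗ[ℂ] L
  /-- `K a = K ⊗ a` (affine center) -/
  K : A →ₗ[ℂ] L
  /-- `C a = C ⊗ a` (Virasoro center) -/
  C : A →ₗ[ℂ] L
  lie_EE : ∀ (n m : ℤ) (x y : g) (a b : A),
      ⁅E n x a, E m y b⁆ = E (n + m) ⁅x, y⁆ (a * b)
        + (if m = -n then (n : ℂ) * form x y else 0) • K (a * b)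
  lie_DE : ∀ (n m : ℤ) (x : g) (a b : A),
      ⁅D n a, E m x b⁆ = (m : ℂ) • E (m + n) x (a * b)
  lie_DD : ∀ (n m : ℤ) (a b : A),
      ⁅D n a, D m b⁆ = ((m : ℂ) - (n : ℂ)) • D (n + m) (a * b)
        + (if m = -n then (((n : ℂ) ^ 3 - (n : ℂ)) / 12) else 0) • C (a * b)
  K_central : ∀ (a : A) (z : L), ⁅K a, z⁆ = 0
  C_central : ∀ (a : A) (z : L), ⁅C a, z⁆ = 0
  span_top : Submodule.span ℂ
      ({z : L | ∃ (n : ℤ) (x : g) (a : A), z = E n x a}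
        ∪ {z : L | ∃ (n : ℤ) (a : A), z = D n a}
        ∪ {z : L | ∃ a : A, z = K a}
        ∪ {z : L | ∃ a : A, z = C a}) = ⊤

namespace LoopAffVir

variable {g A L : Type*} [LieRing g] [LieAlgebra ℂ g] [CommRing A] [Algebra ℂ A]
  [LieRing L] [LieAlgebra ℂ L] (S : LoopAffVir g A L)

/-- Generators of the Cartan subalgebra `h̄ = h̊ ⊕ ℂK ⊕ ℂd₀ ⊕ ℂC ⊆ 𝔏 ⊗ 1`. -/
def cartanSet : Set L :=
  {z : L | ∃ h ∈ S.H, z = S.E 0 h 1} ∪ {S.K 1, S.D 0 1, S.C 1}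

/-- The Cartan subalgebra `h̄` of `𝔏(A)`. -/
def cartan : Submodule ℂ L := Submodule.span ℂ S.cartanSet

/-- `h ∈ h̊` as an element of `h̄`. -/
def eH (h : S.H) : S.cartan :=
  ⟨S.E 0 h 1, Submodule.subset_span (Set.mem_union_left _ ⟨(h : g), h.2, rfl⟩)⟩

/-- `K ⊗ 1` as an element of `h̄`. -/
def K1 : S.cartan :=
  ⟨S.K 1, Submodule.subset_span (Set.mem_union_right _ (by simp))⟩

/-- `d₀ ⊗ 1` as an element of `h̄`. -/
def d0 : S.cartan :=
  ⟨S.D 0 1, Submodule.subset_span (Set.mem_union_right _ (by simp))⟩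

/-- `C ⊗ 1` as an element of `h̄`. -/
def C1 : S.cartan :=
  ⟨S.C 1, Submodule.subset_span (Set.mem_union_right _ (by simp))⟩

variable (V : Type*) [AddCommGroup V] [Module ℂ V] [LieRingModule L V] [LieModule ℂ L V]

/-- The weight space of an `𝔏(A)`-module attached to `χ ∈ h̄*`. -/
def wtSpace (χ : Module.Dual ℂ S.cartan) : Submodule ℂ V where
  carrier := {v : V | ∀ h : S.cartan, ⁅(h : L), v⁆ = χ h • v}
  add_mem' := by
    intro a b ha hb h
    rw [lie_add, ha h, hb h, smul_add]
  zero_mem' := by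
    intro h
    rw [lie_zero, smul_zero]
  smul_mem' := by
    intro c v hv h
    rw [lie_smul, hv h, smul_comm]

/-- The set of weights `P(V)`. -/
def weights : Set (Module.Dual ℂ S.cartan) := {χ | S.wtSpace V χ ≠ ⊥}

/-- `V` is a weight module: it is the (direct) sum of its weight spaces. -/
def IsWeightModule : Prop := (⨆ χ : Module.Dual ℂ S.cartan, S.wtSpace V χ) = ⊤

/-- All weight spaces are finite dimensional. -/
def HasFinDimWeightSpaces : Prop :=
  ∀ χ : Module.Dual ℂ S.cartan, FiniteDimensional ℂ (S.wtSpace V χ)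

/-- Integrability: `V` is a weight module with finite dimensional weight spaces on which all
real root vectors `(x ⊗ tⁿ) ⊗ a`, `x ∈ g̊_α`, `α ∈ Δ̊`, act locally nilpotently. -/
def IsIntegrable : Prop :=
  S.IsWeightModule V ∧ S.HasFinDimWeightSpaces V ∧
    ∀ α : Module.Dual ℂ S.H, α ≠ 0 → S.rootSp α ≠ ⊥ →
      ∀ x ∈ S.rootSp α, ∀ (n : ℤ) (a : A) (v : V),
        ∃ N : ℕ, ((LieModule.toEnd ℂ L V) (S.E n x a) ^ N) v = 0

/-- The highest weight space
`M = {v ∈ V : (x ⊗ tⁿ ⊗ a) v = 0 ∀ x ∈ g̊_α, α ∈ Δ̊₊, n ∈ ℤ, a ∈ A}` for the second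
triangular decomposition. -/
def hwSpace : Submodule ℂ V where
  carrier := {v : V | ∀ α ∈ S.Δplus, ∀ x ∈ S.rootSp α, ∀ (n : ℤ) (a : A), ⁅S.E n x a, v⁆ = 0}
  add_mem' := by
    intro u w hu hw α hα x hx n a
    rw [lie_add, hu α hα x hx n a, hw α hα x hx n a, add_zero]
  zero_mem' := by
    intro α hα x hx n a
    rw [lie_zero]
  smul_mem' := by
    intro t v hv α hα x hx n a
    rw [lie_smul, hv α hα x hx n a, smul_zero]

/-- Generators of `𝔏(A)⁺ = (n₊ ⊕ Vir⁺) ⊗ A` for the natural triangular decomposition. -/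
def plusSet : Set L :=
  {z : L | ∃ n : ℤ, 0 < n ∧ ∃ (x : g) (a : A), z = S.E n x a} ∪
  {z : L | ∃ α ∈ S.Δplus, ∃ x ∈ S.rootSp α, ∃ a : A, z = S.E 0 x a} ∪
  {z : L | ∃ n : ℤ, 0 < n ∧ ∃ a : A, z = S.D n a}

/-- Generators of `𝔏(A)⁻ = (n₋ ⊕ Vir⁻) ⊗ A` for the natural triangular decomposition. -/
def minusSet : Set L :=
  {z : L | ∃ n : ℤ, n < 0 ∧ ∃ (x : g) (a : A), z = S.E n x a} ∪
  {z : L | ∃ α ∈ S.Δplus, ∃ x ∈ S.rootSp (-α), ∃ a : A, z = S.E 0 x a} ∪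
  {z : L | ∃ n : ℤ, n < 0 ∧ ∃ a : A, z = S.D n a}

/-- Generators of `𝔏(A)⁰ = h̄ ⊗ A`. -/
def cartanASet : Set L :=
  {z : L | ∃ h ∈ S.H, ∃ a : A, z = S.E 0 h a} ∪ {z : L | ∃ a : A, z = S.K a}
    ∪ {z : L | ∃ a : A, z = S.D 0 a} ∪ {z : L | ∃ a : A, z = S.C a}

/-- `𝔏(A)⁰ = h̄ ⊗ A` as a subspace of `L`. -/
def cartanA : Submodule ℂ L := Submodule.span ℂ S.cartanASet

/-- `h ⊗ a`, `h ∈ h̊`, as an element of `h̄ ⊗ A`. -/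
def eHA (h : S.H) (a : A) : S.cartanA :=
  ⟨S.E 0 h a, Submodule.subset_span
    (Set.mem_union_left _ (Set.mem_union_left _ (Set.mem_union_left _ ⟨(h : g), h.2, a, rfl⟩)))⟩

/-- `K ⊗ a` as an element of `h̄ ⊗ A`. -/
def KA (a : A) : S.cartanA :=
  ⟨S.K a, Submodule.subset_span
    (Set.mem_union_left _ (Set.mem_union_left _ (Set.mem_union_right _ ⟨a, rfl⟩)))⟩

/-- `d₀ ⊗ a` as an element of `h̄ ⊗ A`. -/
def DA0 (a : A) : S.cartanA :=
  ⟨S.D 0 a, Submodule.subset_span (Set.mem_union_left _ (Set.mem_union_right _ ⟨a, rfl⟩))⟩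

/-- `C ⊗ a` as an element of `h̄ ⊗ A`. -/
def CA (a : A) : S.cartanA :=
  ⟨S.C a, Submodule.subset_span (Set.mem_union_right _ ⟨a, rfl⟩)⟩

/-- `V` is a highest weight module with highest weight `ψ : h̄ ⊗ A → ℂ` for the natural
triangular decomposition: some nonzero vector `v` is annihilated by `𝔏(A)⁺`, is a
`ψ`-eigenvector for `h̄ ⊗ A`, and generates `V`. -/
def IsHWModule (ψ : Module.Dual ℂ S.cartanA) : Prop :=
  ∃ v : V, v ≠ 0 ∧ (∀ z ∈ S.plusSet, ⁅z, v⁆ = 0) ∧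
    (∀ h : S.cartanA, ⁅(h : L), v⁆ = ψ h • v) ∧
    ∀ W : LieSubmodule ℂ L V, v ∈ W → W = ⊤

/-- `(𝔏 ⊗ I) ⬝ V = 0`. -/
def Annihilates (I : Ideal A) : Prop :=
  ∀ a ∈ I, (∀ (n : ℤ) (x : g) (v : V), ⁅S.E n x a, v⁆ = 0) ∧
    (∀ (n : ℤ) (v : V), ⁅S.D n a, v⁆ = 0) ∧
    (∀ v : V, ⁅S.K a, v⁆ = 0) ∧ (∀ v : V, ⁅S.C a, v⁆ = 0)

/-- `(𝔏₀ ⊗ R)` kills the subspace `X`, where `𝔏₀ = (h̊ ⊗ ℂ[t,t⁻¹] ⊕ ℂK) ⋊ Vir`. -/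
def ZeroPartAnnOn (R : Ideal A) (X : Submodule ℂ V) : Prop :=
  ∀ a ∈ R, ∀ v ∈ X,
    (∀ (n : ℤ) (h : g), h ∈ S.H → ⁅S.E n h a, v⁆ = 0) ∧
    (∀ n : ℤ, ⁅S.D n a, v⁆ = 0) ∧ ⁅S.K a, v⁆ = 0 ∧ ⁅S.C a, v⁆ = 0

/-- Generators of `𝔏(A)₀ = ((h̊ ⊗ ℂ[t,t⁻¹] ⊕ ℂK) ⋊ Vir) ⊗ A`. -/
def zeroPartSet : Set L :=
  {z : L | ∃ (n : ℤ) (h : g), h ∈ S.H ∧ ∃ a : A, z = S.E n h a}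
    ∪ {z : L | ∃ a : A, z = S.K a}
    ∪ {z : L | ∃ (n : ℤ) (a : A), z = S.D n a}
    ∪ {z : L | ∃ a : A, z = S.C a}

/-- Generators of `g(A) = (g̊ ⊗ ℂ[t,t⁻¹] ⊕ ℂK ⊕ ℂd₀) ⊗ A`. -/
def gASet : Set L :=
  {z : L | ∃ (n : ℤ) (x : g) (a : A), z = S.E n x a}
    ∪ {z : L | ∃ a : A, z = S.K a} ∪ {z : L | ∃ a : A, z = S.D 0 a}

/-- Generators of `(h̊ ⊗ ℂ[t,t⁻¹] ⊕ ℂK) ⊗ A`. -/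
def heisSet : Set L :=
  {z : L | ∃ (n : ℤ) (h : g), h ∈ S.H ∧ ∃ a : A, z = S.E n h a}
    ∪ {z : L | ∃ a : A, z = S.K a}

/-- The smallest subspace of `V` containing `X` and stable under the operators in `Ops`;
this models `U(⋯) ⬝ X`. -/
def opClosure (Ops : Set L) (X : Submodule ℂ V) : Submodule ℂ V :=
  sInf {N : Submodule ℂ V | X ≤ N ∧ ∀ z ∈ Ops, ∀ v ∈ N, ⁅z, v⁆ ∈ N}

/-- The reflection `λ ↦ λ - λ(b) • β` on `h̄*`. -/
def reflMap (b : S.cartan) (β : Module.Dual ℂ S.cartan) :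
    Module.End ℂ (Module.Dual ℂ S.cartan) :=
  LinearMap.id - LinearMap.smulRight (Module.Dual.eval ℂ S.cartan b) β

/-- Given `ν⁻¹ : h̊* → h̊` (inverse of the form), the coroot
`β∨ = α∨ + (2 / ⟨α,α⟩) K ∈ h̄` of the real root `β = α + nδ`. -/
def corootOf (nu : Module.Dual ℂ S.H → S.H) (α : Module.Dual ℂ S.H) : S.cartan :=
  (2 / α (nu α)) • (S.eH (nu α) + S.K1)

/-- The (affine) Weyl group `W` of `𝔏(A)`, generated by the reflections in the real
roots `β = α + nδ`, acting on `h̄*`. -/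
def weylMonoid (nu : Module.Dual ℂ S.H → S.H)
    (ext : Module.Dual ℂ S.H →ₗ[ℂ] Module.Dual ℂ S.cartan)
    (δf : Module.Dual ℂ S.cartan) :
    Submonoid (Module.End ℂ (Module.Dual ℂ S.cartan)) :=
  Submonoid.closure {w | ∃ (α : Module.Dual ℂ S.H) (n : ℤ), α ≠ 0 ∧ S.rootSp α ≠ ⊥ ∧
    w = S.reflMap (S.corootOf nu α) (ext α + (n : ℂ) • δf)}

/-- The reflection `σ_α : h ↦ h - α(h) • α∨` on `h̊`. -/
def finReflMap (nu : Module.Dual ℂ S.H → S.H) (α : Module.Dual ℂ S.H) :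
    Module.End ℂ S.H :=
  LinearMap.id - LinearMap.smulRight (α : S.H →ₗ[ℂ] ℂ) ((2 / α (nu α)) • nu α)

/-- The finite Weyl group `W̊` of `g̊`, acting on `h̊`. -/
def finWeyl (nu : Module.Dual ℂ S.H → S.H) : Submonoid (Module.End ℂ S.H) :=
  Submonoid.closure {w | ∃ α : Module.Dual ℂ S.H, α ≠ 0 ∧ S.rootSp α ≠ ⊥ ∧
    w = S.finReflMap nu α}

/-- `ℤ[W̊(θ∨)] ⊆ h̊`: the additive group generated by the `W̊`-orbit of `θ∨`. -/
def thetaOrbitSpan (nu : Module.Dual ℂ S.H → S.H) (θ : Module.Dual ℂ S.H) :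
    AddSubgroup S.H :=
  AddSubgroup.closure {h | ∃ w ∈ S.finWeyl nu, h = w ((2 / θ (nu θ)) • nu θ)}

/-- The `d₀`-eigenspace of `V` for the eigenvalue `μ`. -/
def d0Eig (μ : ℂ) : Submodule ℂ V where
  carrier := {v : V | ⁅S.D 0 1, v⁆ = μ • v}
  add_mem' := by
    intro a b ha hb
    show ⁅S.D 0 1, a + b⁆ = μ • (a + b)
    rw [lie_add, ha, hb, smul_add]
  zero_mem' := by
    show ⁅S.D 0 1, (0 : V)⁆ = μ • (0 : V)
    rw [lie_zero, smul_zero]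
  smul_mem' := by
    intro c v hv
    show ⁅S.D 0 1, c • v⁆ = μ • c • v
    rw [lie_smul, hv, smul_comm]

end LoopAffVir

end

/-!
Let `v` be the highest weight vector. Since `d₀ ⊗ A` acts on `v` by scalars, the coefficients `a`
for which a lowering current of nonzero degree kills `v` form an ideal, and this ideal is cofinite
because the current maps `A` into a single weight space. Bracketing with raising operators turns
the vanishing in degrees `-1` and `-2` into the vanishing of `d₀ ⊗ a`, `C ⊗ a`, `K ⊗ a` and
`h̊ ⊗ a` on `v`.

To pass to the radical, consider `sl₂ ⊗ A` attached to a real root, with currents `e`, `f`, `h`.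
If `h ⊗ c²A` kills `v`, then modulo vectors killed by `n` raising operators
`(e ⊗ b) (f ⊗ c)ⁿ⁺¹ v` equals `(n + 1) p (f ⊗ c)ⁿ v`, where `p` is the eigenvalue of `h ⊗ bc`
on `v`. As `f ⊗ c` acts nilpotently on `v`, this forces `p = 0`.
-/

section Annihilator

variable {R A L V : Type*} [CommRing R] [CommRing A] [Module R A] [LieRing L] [LieAlgebra R L]
  [AddCommGroup V] [LieRingModule L V]

/-- The largest ideal of `A` contained in the kernel of `a ↦ ⁅f a, v⁆`. -/
def lieAnnIdeal (f : A →ₗ[R] L) (v : V) : Ideal A where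
  carrier := {a | ∀ b, ⁅f (a * b), v⁆ = 0}
  add_mem' {a a'} ha ha' b := by rw [add_mul, map_add, add_lie, ha, ha', add_zero]
  zero_mem' b := by rw [zero_mul, map_zero, zero_lie]
  smul_mem' c a ha b := by rw [smul_eq_mul, mul_comm c, mul_assoc, ha]

lemma mem_lieAnnIdeal {f : A →ₗ[R] L} {v : V} {a : A} :
    a ∈ lieAnnIdeal f v ↔ ∀ b, ⁅f (a * b), v⁆ = 0 := Iff.rfl

lemma le_lieAnnIdeal_iff {f : A →ₗ[R] L} {v : V} {I : Ideal A} :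
    I ≤ lieAnnIdeal f v ↔ ∀ a ∈ I, ⁅f a, v⁆ = 0 :=
  ⟨fun h a ha ↦ by simpa using h ha 1, fun h a ha b ↦ h _ (I.mul_mem_right b ha)⟩

lemma lie_eq_zero_of_mem_lieAnnIdeal {f : A →ₗ[R] L} {v : V} {a : A}
    (ha : a ∈ lieAnnIdeal f v) : ⁅f a, v⁆ = 0 :=
  le_lieAnnIdeal_iff.1 le_rfl a ha

variable {M : Type*} [AddCommGroup M] [Module R M] [Module R V] [LieModule R L V]

/-- The linear map `m ↦ ⁅f m, v⁆`. -/
def orbitMap (f : M →ₗ[R] L) (v : V) : M →ₗ[R] V :=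
  (LieModule.toEnd R L V : L →ₗ[R] Module.End R V).flip v ∘ₗ f

@[simp]
lemma orbitMap_apply (f : M →ₗ[R] L) (v : V) (m : M) : orbitMap f v m = ⁅f m, v⁆ := rfl

end Annihilator

section CurrentSl2

variable {R A L V : Type*} [CommRing R] [CommRing A] [Module R A] [LieRing L] [LieAlgebra R L]
  [AddCommGroup V] [Module R V] [LieRingModule L V] [LieModule R L V]

/-- Currents `e`, `f`, `h` satisfying the relations of `sl₂ ⊗ A`. The scalar `κ`, equal to `2` for
a normalized triple, is arbitrary, so that arbitrary opposite root vectors are allowed. -/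
structure IsCurrentSl2Triple (e f h : A →ₗ[R] L) (κ : R) : Prop where
  lie_e_f (a b : A) : ⁅e a, f b⁆ = h (a * b)
  lie_h_e (a b : A) : ⁅h a, e b⁆ = κ • e (a * b)
  lie_h_f (a b : A) : ⁅h a, f b⁆ = -κ • f (a * b)
  lie_f_f (a b : A) : ⁅f a, f b⁆ = 0

/-- The vectors killed by all products of `n` raising operators `e a`, `a ∈ A`. -/
def raisingFiltration (V : Type*) [AddCommGroup V] [Module R V] [LieRingModule L V]
    [LieModule R L V] (e : A →ₗ[R] L) : ℕ → Submodule R V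
  | 0 => ⊥
  | n + 1 => ⨅ a, (raisingFiltration V e n).comap (LieModule.toEnd R L V (e a))

lemma mem_raisingFiltration_succ {e : A →ₗ[R] L} {n : ℕ} {w : V} :
    w ∈ raisingFiltration V e (n + 1) ↔ ∀ a, ⁅e a, w⁆ ∈ raisingFiltration V e n := by
  simp [raisingFiltration]

lemma toEnd_pow_succ_apply (z : L) (n : ℕ) (v : V) :
    (LieModule.toEnd R L V z ^ (n + 1)) v = ⁅z, (LieModule.toEnd R L V z ^ n) v⁆ := by
  rw [pow_succ', Module.End.mul_apply, LieModule.toEnd_apply_apply]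

lemma lie_toEnd_pow_apply_of_lie_eq_zero {y z : L} (hyz : ⁅y, z⁆ = 0) (n : ℕ) (v : V) :
    ⁅y, (LieModule.toEnd R L V z ^ n) v⁆ = (LieModule.toEnd R L V z ^ n) ⁅y, v⁆ := by
  have hcomm : Commute (LieModule.toEnd R L V y) (LieModule.toEnd R L V z) :=
    LinearMap.ext fun w ↦ by
      simp only [Module.End.mul_apply, LieModule.toEnd_apply_apply]
      rw [leibniz_lie, hyz, zero_lie, zero_add]
  exact LinearMap.congr_fun (hcomm.pow_right n).eq v

namespace IsCurrentSl2Triple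

variable {e f h : A →ₗ[R] L} {κ : R} {v w : V} {b c : A} {p : R} {n : ℕ}

lemma lie_h_mem (ht : IsCurrentSl2Triple e f h κ) (a : A)
    (hw : w ∈ raisingFiltration V e n) : ⁅h a, w⁆ ∈ raisingFiltration V e n := by
  induction n generalizing w with
  | zero =>
    obtain rfl : w = 0 := hw
    simp
  | succ n ih =>
    rw [mem_raisingFiltration_succ] at hw ⊢
    intro b
    rw [leibniz_lie, ← lie_skew, ht.lie_h_e, neg_lie, smul_lie]
    exact add_mem (neg_mem (Submodule.smul_mem _ _ (hw _))) (ih (hw b))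

lemma lie_f_mem (ht : IsCurrentSl2Triple e f h κ) (a : A)
    (hw : w ∈ raisingFiltration V e n) : ⁅f a, w⁆ ∈ raisingFiltration V e (n + 1) := by
  induction n generalizing w with
  | zero =>
    obtain rfl : w = 0 := hw
    simp
  | succ n ih =>
    rw [mem_raisingFiltration_succ]
    intro b
    rw [leibniz_lie, ht.lie_e_f]
    exact add_mem (ht.lie_h_mem _ hw) (ih (mem_raisingFiltration_succ.1 hw b))

lemma toEnd_f_pow_mem (ht : IsCurrentSl2Triple e f h κ) (c : A)
    (hw : w ∈ raisingFiltration V e 1) (n : ℕ) :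
    (LieModule.toEnd R L V (f c) ^ n) w ∈ raisingFiltration V e (n + 1) := by
  induction n with
  | zero => exact hw
  | succ n ih =>
    rw [toEnd_pow_succ_apply]
    exact ht.lie_f_mem c ih

lemma lie_f_toEnd_f_pow_mem (ht : IsCurrentSl2Triple e f h κ) (hev : ∀ a, ⁅e a, v⁆ = 0)
    (hb : b ∈ lieAnnIdeal h v) (n : ℕ) :
    ⁅f b, (LieModule.toEnd R L V (f c) ^ n) v⁆ ∈ raisingFiltration V e (n + 1) := by
  rw [lie_toEnd_pow_apply_of_lie_eq_zero (ht.lie_f_f b c)]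
  refine ht.toEnd_f_pow_mem c (mem_raisingFiltration_succ.2 fun a ↦ ?_) n
  rw [leibniz_lie, ht.lie_e_f, hev, lie_zero, add_zero, mul_comm, mem_lieAnnIdeal.1 hb]
  exact zero_mem _

lemma lie_h_toEnd_f_pow_sub_mem (ht : IsCurrentSl2Triple e f h κ) (hev : ∀ a, ⁅e a, v⁆ = 0)
    (hc : c ^ 2 ∈ lieAnnIdeal h v) (hp : ⁅h (b * c), v⁆ = p • v) (n : ℕ) :
    ⁅h (b * c), (LieModule.toEnd R L V (f c) ^ n) v⁆ - p • (LieModule.toEnd R L V (f c) ^ n) v ∈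
      raisingFiltration V e n := by
  induction n with
  | zero => simp [hp]
  | succ n ih =>
    have hmem : b * c * c ∈ lieAnnIdeal h v := by
      rw [mul_assoc, ← sq]
      exact Ideal.mul_mem_left _ b hc
    have := add_mem (Submodule.smul_mem _ (-κ) (ht.lie_f_toEnd_f_pow_mem (c := c) hev hmem n))
      (ht.lie_f_mem c ih)
    rwa [lie_sub, lie_smul, ← add_sub_assoc, ← smul_lie, ← ht.lie_h_f, ← leibniz_lie,
      ← toEnd_pow_succ_apply] at this

lemma lie_e_toEnd_f_pow_sub_mem (ht : IsCurrentSl2Triple e f h κ) (hev : ∀ a, ⁅e a, v⁆ = 0)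
    (hc : c ^ 2 ∈ lieAnnIdeal h v) (hp : ⁅h (b * c), v⁆ = p • v) (n : ℕ) :
    ⁅e b, (LieModule.toEnd R L V (f c) ^ (n + 1)) v⁆ -
        ((n + 1 : R) * p) • (LieModule.toEnd R L V (f c) ^ n) v ∈ raisingFiltration V e n := by
  induction n with
  | zero => simp [hp, ht.lie_e_f, hev, leibniz_lie (e b) (f c) v]
  | succ n ih =>
    convert add_mem (ht.lie_h_toEnd_f_pow_sub_mem hev hc hp (n + 1)) (ht.lie_f_mem c ih) using 1
    rw [toEnd_pow_succ_apply _ (n + 1), leibniz_lie, ht.lie_e_f, lie_sub, lie_smul,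
      ← toEnd_pow_succ_apply]
    push_cast
    module

theorem isRadical_lieAnnIdeal {R L V : Type*} [Field R] [CharZero R] [Module R A] [LieRing L]
    [LieAlgebra R L] [AddCommGroup V] [Module R V] [LieRingModule L V] [LieModule R L V]
    {e f h : A →ₗ[R] L} {κ : R} {v : V} (ht : IsCurrentSl2Triple e f h κ)
    (hev : ∀ a, ⁅e a, v⁆ = 0) (hhv : ∀ a, ∃ p : R, ⁅h a, v⁆ = p • v)
    (hnil : ∀ a, ∃ N : ℕ, (LieModule.toEnd R L V (f a) ^ N) v = 0) :
    (lieAnnIdeal h v).IsRadical := by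
  rw [Ideal.isRadical_iff_pow_one_lt 2 one_lt_two]
  refine fun c hc ↦ mem_lieAnnIdeal.2 fun b ↦ ?_
  obtain ⟨p, hp⟩ := hhv (b * c)
  rw [mul_comm, hp]
  rcases eq_or_ne p 0 with rfl | hp0
  · exact zero_smul R v
  obtain ⟨N, hN⟩ := hnil c
  have descent (n : ℕ) :
      (LieModule.toEnd R L V (f c) ^ n) v ∈ raisingFiltration V e n → v = 0 := by
    induction n with
    | zero => exact id
    | succ n ih =>
      intro hw
      have hpow := (Submodule.sub_mem_iff_right _ (mem_raisingFiltration_succ.1 hw b)).1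
        (ht.lie_e_toEnd_f_pow_sub_mem hev hc hp n)
      exact ih ((Submodule.smul_mem_iff _ (mul_ne_zero n.cast_add_one_ne_zero hp0)).1 hpow)
  rw [descent N (hN ▸ zero_mem _), smul_zero]

end IsCurrentSl2Triple

end CurrentSl2

namespace IsCofiniteIdeal

variable {A : Type*} [CommRing A] [Algebra ℂ A] {I J : Ideal A}

lemma iff_cofg : IsCofiniteIdeal I ↔ (I.restrictScalars ℂ).CoFG :=
  Module.Finite.equiv_iff (Submodule.Quotient.restrictScalarsEquiv ℂ I).symm

lemma mono (hIJ : I ≤ J) (hI : IsCofiniteIdeal I) : IsCofiniteIdeal J :=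
  iff_cofg.2 ((iff_cofg.1 hI).of_le ((Submodule.restrictScalars_le ℂ).2 hIJ))

lemma inf (hI : IsCofiniteIdeal I) (hJ : IsCofiniteIdeal J) : IsCofiniteIdeal (I ⊓ J) :=
  iff_cofg.2 (Submodule.restrictScalars_inf ℂ I J ▸ (iff_cofg.1 hI).inf (iff_cofg.1 hJ))

lemma finset_inf {ι : Type*} (s : Finset ι) {I : ι → Ideal A}
    (hI : ∀ i ∈ s, IsCofiniteIdeal (I i)) : IsCofiniteIdeal (s.inf I) :=
  Finset.inf_induction (iff_cofg.2 Submodule.CoFG.top) (fun _ h _ h' ↦ h.inf h') hI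

end IsCofiniteIdeal

namespace LoopAffVir

section RootVectors

variable {g A L : Type*} [LieRing g] [LieAlgebra ℂ g] [CommRing A] [Algebra ℂ A]
  [LieRing L] [LieAlgebra ℂ L] (S : LoopAffVir g A L) {α β : Module.Dual ℂ S.H} {x y : g}

lemma rootSp_zero_le_cartan : S.rootSp 0 ≤ S.H.toSubmodule := by
  have := S.isCartan
  intro x hx
  rw [LieSubalgebra.mem_toSubmodule, ← LieSubalgebra.IsCartanSubalgebra.self_normalizing (H := S.H),
    LieSubalgebra.mem_normalizer_iff']
  intro h hh
  simp [(S.rootSp_def 0 x).1 hx ⟨h, hh⟩]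

variable {S}

lemma lie_mem_rootSp_add (hx : x ∈ S.rootSp α) (hy : y ∈ S.rootSp β) :
    ⁅x, y⁆ ∈ S.rootSp (α + β) :=
  (S.rootSp_def _ _).2 fun h ↦ by
    rw [leibniz_lie, (S.rootSp_def α x).1 hx, (S.rootSp_def β y).1 hy, smul_lie, lie_smul,
      ← add_smul, LinearMap.add_apply]

lemma lie_mem_cartan (hx : x ∈ S.rootSp α) (hy : y ∈ S.rootSp (-α)) : ⁅x, y⁆ ∈ S.H :=
  S.rootSp_zero_le_cartan (add_neg_cancel α ▸ lie_mem_rootSp_add hx hy)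

lemma form_eq_zero_of_ne_neg (hx : x ∈ S.rootSp α) (hy : y ∈ S.rootSp β) (hαβ : β ≠ -α) :
    S.form x y = 0 := by
  obtain ⟨h, hh⟩ : ∃ h, α h + β h ≠ 0 := by
    contrapose! hαβ
    ext h
    exact eq_neg_of_add_eq_zero_right (hαβ h)
  have hinv := S.form_invariant x h y
  rw [(S.rootSp_def β y).1 hy h, ← lie_skew, (S.rootSp_def α x).1 hx h] at hinv
  simp only [map_neg, map_smul, LinearMap.neg_apply, LinearMap.smul_apply, smul_eq_mul] at hinv
  exact (mul_eq_zero.1 (by linear_combination -hinv)).resolve_left hh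

end RootVectors

section Killing

open LieAlgebra LieAlgebra.IsKilling LieModule

variable {g A L : Type*} [LieRing g] [LieAlgebra ℂ g] [FiniteDimensional ℂ g] [IsKilling ℂ g]
  [CommRing A] [Algebra ℂ A] [LieRing L] [LieAlgebra ℂ L] (S : LoopAffVir g A L)

lemma mem_rootSp_of_mem_rootSpace [S.H.IsCartanSubalgebra] {α : Weight ℂ S.H g} {x : g}
    (hx : x ∈ rootSpace S.H α) : x ∈ S.rootSp α.toLinear :=
  (S.rootSp_def _ x).2 fun _ ↦ lie_eq_smul_of_mem_rootSpace hx _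

lemma iSup_rootSp_eq_top : ⨆ α, S.rootSp α = ⊤ := by
  have := S.isCartan
  have htop : ⨆ α : Weight ℂ S.H g, (rootSpace S.H α).toSubmodule = ⊤ := by
    rw [← LieSubmodule.iSup_toSubmodule, iSup_genWeightSpace_eq_top' ℂ S.H g,
      LieSubmodule.top_toSubmodule]
  rw [eq_top_iff, ← htop]
  exact iSup_le fun α ↦ le_iSup_of_le α.toLinear fun _ ↦ S.mem_rootSp_of_mem_rootSpace

lemma exists_finset_rootVectors_span_eq_top :
    ∃ s : Finset g, (∀ x ∈ s, ∃ α, x ∈ S.rootSp α) ∧ Submodule.span ℂ (s : Set g) = ⊤ := by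
  have hspan : Submodule.span ℂ (⋃ α, (S.rootSp α : Set g)) = ⊤ := by
    simp [Submodule.span_iUnion, S.iSup_rootSp_eq_top]
  obtain ⟨s, hs, hseq⟩ := Submodule.fg_span_iff_fg_span_finset_subset _ |>.1
    (hspan ▸ Module.Finite.fg_top : (Submodule.span ℂ (⋃ α, (S.rootSp α : Set g))).FG)
  exact ⟨s, fun x hx ↦ by simpa using hs hx, hseq.symm.trans hspan⟩

lemma cartan_le_span_lie_rootSp : S.H.toSubmodule ≤ Submodule.span ℂ
    {h | ∃ α ∈ S.Δplus, ∃ x ∈ S.rootSp α, ∃ y ∈ S.rootSp (-α), ⁅x, y⁆ = h} := by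
  have := S.isCartan
  set P := Submodule.span ℂ {h | ∃ α ∈ S.Δplus, ∃ x ∈ S.rootSp α, ∃ y ∈ S.rootSp (-α), ⁅x, y⁆ = h}
  have coroot_mem (α : S.H.root) : ((rootSystem S.H).coroot α : g) ∈ P := by
    have hα : (α : Weight ℂ S.H g).IsNonZero := S.H.isNonZero_coe_root α
    obtain ⟨h, e, f, ht, he, hf⟩ := exists_isSl2Triple_of_weight_isNonZero hα
    rw [rootSystem_coroot_apply, ← ht.h_eq_coroot hα he hf, ← ht.lie_e_f]
    replace he := S.mem_rootSp_of_mem_rootSpace he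
    replace hf : f ∈ S.rootSp (-(α : Weight ℂ S.H g).toLinear) := by
      rw [← Weight.toLinear_neg]
      exact S.mem_rootSp_of_mem_rootSpace hf
    rcases S.Δplus_cover _ (by simp) (Submodule.ne_bot_iff _ |>.2 ⟨e, he, ht.e_ne_zero⟩)
      with hpos | hneg
    · exact Submodule.subset_span ⟨_, hpos, e, he, f, hf, rfl⟩
    · rw [← lie_skew]
      exact neg_mem (Submodule.subset_span ⟨_, hneg, f, hf, e, by rwa [neg_neg], rfl⟩)
  have hle : Submodule.span ℂ (Set.range (rootSystem S.H).coroot) ≤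
      P.comap S.H.toSubmodule.subtype :=
    Submodule.span_le.2 (Set.range_subset_iff.2 coroot_mem)
  rw [RootPairing.IsRootSystem.span_coroot_eq_top] at hle
  exact fun h hh ↦ hle (x := ⟨h, hh⟩) Submodule.mem_top

variable {S} in
lemma exists_form_ne_zero_of_mem_rootSp {α : Module.Dual ℂ S.H} {x : g} (hx : x ∈ S.rootSp α)
    (hx0 : x ≠ 0) : ∃ y ∈ S.rootSp (-α), S.form x y ≠ 0 := by
  by_contra! hzero
  have hle : ⨆ β, S.rootSp β ≤ LinearMap.ker (S.form x) := iSup_le fun β y hy ↦ by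
    rcases eq_or_ne β (-α) with rfl | hβ
    · exact hzero y hy
    · exact form_eq_zero_of_ne_neg hx hy hβ
  rw [iSup_rootSp_eq_top, top_le_iff, LinearMap.ker_eq_top] at hle
  exact hx0 (S.form_nondeg x fun y ↦ by rw [hle, LinearMap.zero_apply])

lemma Δplus_nonempty [Nontrivial g] : S.Δplus.Nonempty := by
  by_contra! hempty
  have hH : S.H.toSubmodule = ⊥ := by simpa [hempty] using S.cartan_le_span_lie_rootSp
  have hbot : ⨆ α, S.rootSp α ≤ ⊥ := iSup_le fun α ↦ by
    rcases eq_or_ne α 0 with rfl | hα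
    · exact hH ▸ S.rootSp_zero_le_cartan
    · by_contra hne
      simpa [hempty] using S.Δplus_cover α hα fun h ↦ hne h.le
  exact bot_ne_top (le_bot_iff.1 (S.iSup_rootSp_eq_top ▸ hbot)).symm

end Killing

section WeightSpaces

variable {g A L V : Type*} [LieRing g] [LieAlgebra ℂ g] [CommRing A] [Algebra ℂ A]
  [LieRing L] [LieAlgebra ℂ L] {S : LoopAffVir g A L}
  [AddCommGroup V] [Module ℂ V] [LieRingModule L V]

variable (S) in
/-- `v` is a highest weight vector of highest weight `ψ` for the natural triangular decomposition;
it need not generate `V`. -/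
structure IsHighestWeightVector (ψ : Module.Dual ℂ S.cartanA) (v : V) : Prop where
  ne_zero : v ≠ 0
  lie_plus : ∀ z ∈ S.plusSet, ⁅z, v⁆ = 0
  lie_cartanA : ∀ h : S.cartanA, ⁅(h : L), v⁆ = ψ h • v

namespace IsHighestWeightVector

variable {ψ : Module.Dual ℂ S.cartanA} {v : V}

lemma apply_eq_zero_iff (hv : S.IsHighestWeightVector ψ v) {z : S.cartanA} :
    ψ z = 0 ↔ ⁅(z : L), v⁆ = 0 := by
  rw [hv.lie_cartanA, smul_eq_zero_iff_left hv.ne_zero]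

lemma lie_E_of_pos (hv : S.IsHighestWeightVector ψ v) {n : ℤ} (hn : 0 < n) (x : g) (a : A) :
    ⁅S.E n x a, v⁆ = 0 :=
  hv.lie_plus _ (Or.inl (Or.inl ⟨n, hn, x, a, rfl⟩))

lemma lie_E_zero (hv : S.IsHighestWeightVector ψ v) {α : Module.Dual ℂ S.H} (hα : α ∈ S.Δplus)
    {x : g} (hx : x ∈ S.rootSp α) (a : A) : ⁅S.E 0 x a, v⁆ = 0 :=
  hv.lie_plus _ (Or.inl (Or.inr ⟨α, hα, x, hx, a, rfl⟩))

lemma lie_D_of_pos (hv : S.IsHighestWeightVector ψ v) {n : ℤ} (hn : 0 < n) (a : A) :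
    ⁅S.D n a, v⁆ = 0 :=
  hv.lie_plus _ (Or.inr ⟨n, hn, a, rfl⟩)

lemma exists_lie_cartanSet_eq_smul (hv : S.IsHighestWeightVector ψ v) {z : L}
    (hz : z ∈ S.cartanSet) : ∃ c : ℂ, ⁅z, v⁆ = c • v := by
  obtain ⟨h, hh, rfl⟩ | rfl | rfl | rfl := hz
  exacts [⟨_, hv.lie_cartanA (S.eHA ⟨h, hh⟩ 1)⟩, ⟨_, hv.lie_cartanA (S.KA 1)⟩,
    ⟨_, hv.lie_cartanA (S.DA0 1)⟩, ⟨_, hv.lie_cartanA (S.CA 1)⟩]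

end IsHighestWeightVector

variable [LieModule ℂ L V]

variable (S) in
/-- The real root vectors of `𝔏(A)` act nilpotently on `v`. -/
def RealRootsActNilpotentlyOn (v : V) : Prop :=
  ∀ α : Module.Dual ℂ S.H, α ≠ 0 → ∀ x ∈ S.rootSp α, ∀ (n : ℤ) (a : A),
    ∃ N : ℕ, (LieModule.toEnd ℂ L V (S.E n x a) ^ N) v = 0

lemma IsIntegrable.realRootsActNilpotentlyOn (hInt : S.IsIntegrable V) (v : V) :
    S.RealRootsActNilpotentlyOn v := by
  intro α hα x hx n a
  rcases eq_or_ne (S.rootSp α) ⊥ with hbot | hbot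
  · obtain rfl : x = 0 := by simpa [hbot] using hx
    exact ⟨1, by simp⟩
  · exact hInt.2.2 α hα hbot x hx n a v

variable (S) in
/-- `f` is a current `a ↦ X ⊗ a` with `X` of weight `χ` for `h̊` and of degree `n`. -/
structure IsRootCurrent (χ : Module.Dual ℂ S.H) (n : ℤ) (f : A →ₗ[ℂ] L) : Prop where
  lie_E (h : S.H) (a b : A) : ⁅S.E 0 h a, f b⁆ = χ h • f (a * b)
  lie_D (a b : A) : ⁅S.D 0 a, f b⁆ = (n : ℂ) • f (a * b)

lemma isRootCurrent_E {χ : Module.Dual ℂ S.H} {x : g} (hx : x ∈ S.rootSp χ) (n : ℤ) :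
    S.IsRootCurrent χ n (S.E n x) where
  lie_E h a b := by simp [S.lie_EE, (S.rootSp_def χ x).1 hx h]
  lie_D a b := by simp [S.lie_DE]

lemma isRootCurrent_D (n : ℤ) : S.IsRootCurrent 0 n (S.D n) where
  lie_E h a b := by rw [← lie_skew, S.lie_DE]; simp
  lie_D a b := by simp [S.lie_DD]

lemma exists_le_wtSpace {W : Submodule ℂ V}
    (hW : ∀ z ∈ S.cartanSet, ∃ c : ℂ, ∀ w ∈ W, ⁅z, w⁆ = c • w) : ∃ χ, W ≤ S.wtSpace V χ := by
  rcases eq_or_ne W ⊥ with rfl | hne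
  · exact ⟨0, bot_le⟩
  obtain ⟨w₀, hw₀, hw₀_ne⟩ := Submodule.exists_mem_ne_zero_of_ne_bot hne
  have scalar (z : L) (hz : z ∈ S.cartan) : ∃ c : ℂ, ∀ w ∈ W, ⁅z, w⁆ = c • w := by
    induction hz using Submodule.span_induction with
    | mem z hz => exact hW z hz
    | zero => exact ⟨0, by simp⟩
    | add y z _ _ hy hz =>
      obtain ⟨c, hc⟩ := hy
      obtain ⟨d, hd⟩ := hz
      exact ⟨c + d, fun w hw ↦ by rw [add_lie, hc w hw, hd w hw, add_smul]⟩
    | smul t z _ hz =>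
      obtain ⟨c, hc⟩ := hz
      exact ⟨t * c, fun w hw ↦ by rw [smul_lie, hc w hw, mul_smul]⟩
  obtain ⟨φ, hφ⟩ := Module.Projective.exists_dual_eq_one ℂ hw₀_ne
  refine ⟨φ ∘ₗ orbitMap S.cartan.subtype w₀, fun w hw z ↦ ?_⟩
  obtain ⟨c, hc⟩ := scalar z z.2
  simp [hc w hw, hc w₀ hw₀, hφ]

namespace IsRootCurrent

variable {χ : Module.Dual ℂ S.H} {n : ℤ} {f : A →ₗ[ℂ] L}
  {ψ : Module.Dual ℂ S.cartanA} {v : V}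

lemma exists_lie_cartanSet_eq_smul (hf : S.IsRootCurrent χ n f) {z : L} (hz : z ∈ S.cartanSet) :
    ∃ c : ℂ, ∀ a, ⁅z, f a⁆ = c • f a := by
  obtain ⟨h, hh, rfl⟩ | rfl | rfl | rfl := hz
  · exact ⟨χ ⟨h, hh⟩, fun a ↦ by simpa using hf.lie_E ⟨h, hh⟩ 1 a⟩
  · exact ⟨0, fun a ↦ by rw [S.K_central, zero_smul]⟩
  · exact ⟨n, fun a ↦ by simpa using hf.lie_D 1 a⟩
  · exact ⟨0, fun a ↦ by rw [S.C_central, zero_smul]⟩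

lemma finiteDimensional_range_orbitMap (hf : S.IsRootCurrent χ n f)
    (hv : S.IsHighestWeightVector ψ v) (hV : S.HasFinDimWeightSpaces V) :
    FiniteDimensional ℂ (LinearMap.range (orbitMap f v)) := by
  have ⟨μ, hμ⟩ := S.exists_le_wtSpace (W := LinearMap.range (orbitMap f v)) fun z hz ↦ by
    obtain ⟨c, hc⟩ := hf.exists_lie_cartanSet_eq_smul hz
    obtain ⟨d, hd⟩ := hv.exists_lie_cartanSet_eq_smul hz
    refine ⟨c + d, ?_⟩
    rintro _ ⟨a, rfl⟩
    rw [orbitMap_apply, leibniz_lie, hc, hd, lie_smul, smul_lie, add_smul]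
  have := hV μ
  exact Submodule.finiteDimensional_of_le hμ

lemma mem_lieAnnIdeal_iff (hf : S.IsRootCurrent χ n f) (hn : n ≠ 0)
    (hv : S.IsHighestWeightVector ψ v) {a : A} : a ∈ lieAnnIdeal f v ↔ ⁅f a, v⁆ = 0 := by
  refine ⟨lie_eq_zero_of_mem_lieAnnIdeal, fun ha ↦ mem_lieAnnIdeal.2 fun b ↦ ?_⟩
  have hsmul : (n : ℂ) • ⁅f (b * a), v⁆ = 0 := by
    have hD : ⁅S.D 0 b, v⁆ = ψ (S.DA0 b) • v := hv.lie_cartanA (S.DA0 b)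
    rw [← smul_lie, ← hf.lie_D, lie_lie, ha, lie_zero, hD, lie_smul, ha, smul_zero, sub_zero]
  rw [mul_comm]
  exact (smul_eq_zero.1 hsmul).resolve_left (Int.cast_ne_zero.2 hn)

theorem isCofiniteIdeal_lieAnnIdeal (hf : S.IsRootCurrent χ n f) (hn : n ≠ 0)
    (hv : S.IsHighestWeightVector ψ v) (hV : S.HasFinDimWeightSpaces V) :
    IsCofiniteIdeal (lieAnnIdeal f v) := by
  have hker : (lieAnnIdeal f v).restrictScalars ℂ = LinearMap.ker (orbitMap f v) := by
    ext a
    simp [hf.mem_lieAnnIdeal_iff hn hv]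
  rw [IsCofiniteIdeal.iff_cofg, hker, ← Submodule.range_fg_iff_ker_cofg, ← Module.Finite.iff_fg]
  exact hf.finiteDimensional_range_orbitMap hv hV

end IsRootCurrent

end WeightSpaces

section LoweringIdeal

variable {g A L V : Type*} [LieRing g] [LieAlgebra ℂ g] [CommRing A] [Algebra ℂ A]
  [LieRing L] [LieAlgebra ℂ L] (S : LoopAffVir g A L)
  [AddCommGroup V] [LieRingModule L V]

/-- The largest ideal `I` such that `g̊ ⊗ t⁻¹ ⊗ I`, `d₋₁ ⊗ I` and `d₋₂ ⊗ I` kill `v`. For a highest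
weight vector it is the ideal required by the theorem. -/
def loweringIdeal (v : V) : Ideal A :=
  (⨅ x, lieAnnIdeal (S.E (-1) x) v) ⊓ lieAnnIdeal (S.D (-1)) v ⊓ lieAnnIdeal (S.D (-2)) v

variable {S} {v : V} {a : A}

lemma lie_E_of_mem_loweringIdeal (ha : a ∈ S.loweringIdeal v) (x : g) : ⁅S.E (-1) x a, v⁆ = 0 :=
  lie_eq_zero_of_mem_lieAnnIdeal ((Submodule.mem_iInf _).1 ha.1.1 x)

lemma lie_D_neg_one_of_mem_loweringIdeal (ha : a ∈ S.loweringIdeal v) : ⁅S.D (-1) a, v⁆ = 0 :=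
  lie_eq_zero_of_mem_lieAnnIdeal ha.1.2

lemma lie_D_neg_two_of_mem_loweringIdeal (ha : a ∈ S.loweringIdeal v) : ⁅S.D (-2) a, v⁆ = 0 :=
  lie_eq_zero_of_mem_lieAnnIdeal ha.2

namespace IsHighestWeightVector

variable [Module ℂ V] [LieModule ℂ L V] {ψ : Module.Dual ℂ S.cartanA}

theorem isCofiniteIdeal_loweringIdeal [FiniteDimensional ℂ g] [LieAlgebra.IsKilling ℂ g]
    (hv : S.IsHighestWeightVector ψ v) (hV : S.HasFinDimWeightSpaces V) :
    IsCofiniteIdeal (S.loweringIdeal v) := by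
  obtain ⟨s, hs, hspan⟩ := S.exists_finset_rootVectors_span_eq_top
  have hE : IsCofiniteIdeal (⨅ x, lieAnnIdeal (S.E (-1) x) v) := by
    refine .mono (I := s.inf fun x ↦ lieAnnIdeal (S.E (-1) x) v) ?_ (.finset_inf s fun x hx ↦ ?_)
    · refine fun a ha ↦ (Submodule.mem_iInf _).2 fun x b ↦ ?_
      have hzero : orbitMap ((S.E (-1)).flip (a * b)) v = 0 :=
        LinearMap.ext_on hspan fun y hy ↦ (Submodule.mem_finsetInf.1 ha) y hy b
      exact LinearMap.congr_fun hzero x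
    · obtain ⟨α, hα⟩ := hs x hx
      exact (isRootCurrent_E hα (-1)).isCofiniteIdeal_lieAnnIdeal (by decide) hv hV
  exact (hE.inf ((isRootCurrent_D (-1)).isCofiniteIdeal_lieAnnIdeal (by decide) hv hV)).inf
    ((isRootCurrent_D (-2)).isCofiniteIdeal_lieAnnIdeal (by decide) hv hV)

lemma lie_D_zero_of_mem_loweringIdeal (hv : S.IsHighestWeightVector ψ v)
    (ha : a ∈ S.loweringIdeal v) : ⁅S.D 0 a, v⁆ = 0 := by
  have hDD : ⁅S.D 1 1, S.D (-1) a⁆ = (-2 : ℂ) • S.D 0 a := by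
    rw [S.lie_DD]
    norm_num
  have hlie : ⁅⁅S.D 1 1, S.D (-1) a⁆, v⁆ = 0 := by
    rw [lie_lie, lie_D_neg_one_of_mem_loweringIdeal ha, hv.lie_D_of_pos one_pos, lie_zero, lie_zero,
      sub_zero]
  simpa [hDD] using hlie

lemma lie_C_of_mem_loweringIdeal (hv : S.IsHighestWeightVector ψ v)
    (ha : a ∈ S.loweringIdeal v) : ⁅S.C a, v⁆ = 0 := by
  have hDD : ⁅S.D 2 1, S.D (-2) a⁆ = (-4 : ℂ) • S.D 0 a + (1 / 2 : ℂ) • S.C a := by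
    rw [S.lie_DD]
    norm_num
  have hlie : ⁅⁅S.D 2 1, S.D (-2) a⁆, v⁆ = 0 := by
    rw [lie_lie, lie_D_neg_two_of_mem_loweringIdeal ha, hv.lie_D_of_pos two_pos, lie_zero, lie_zero,
      sub_zero]
  simpa [hDD, hv.lie_D_zero_of_mem_loweringIdeal ha] using hlie

lemma lie_E_zero_lie_add_of_mem_loweringIdeal (hv : S.IsHighestWeightVector ψ v)
    (ha : a ∈ S.loweringIdeal v) (x y : g) :
    ⁅S.E 0 ⁅x, y⁆ a, v⁆ + S.form x y • ⁅S.K a, v⁆ = 0 := by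
  have hlie : ⁅⁅S.E 1 x 1, S.E (-1) y a⁆, v⁆ = 0 := by
    rw [lie_lie, lie_E_of_mem_loweringIdeal ha, hv.lie_E_of_pos one_pos, lie_zero, lie_zero,
      sub_zero]
  simpa [S.lie_EE] using hlie

lemma lie_K_of_mem_loweringIdeal [Nontrivial g] (hv : S.IsHighestWeightVector ψ v)
    (ha : a ∈ S.loweringIdeal v) : ⁅S.K a, v⁆ = 0 := by
  obtain ⟨x, hx⟩ := exists_ne (0 : g)
  obtain ⟨y, hxy⟩ : ∃ y, S.form x y ≠ 0 := by
    contrapose! hx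
    exact S.form_nondeg x hx
  -- the bracket is antisymmetric and the form symmetric: adding both orders isolates `K ⊗ a`
  have hsum : (2 * S.form x y) • ⁅S.K a, v⁆ = 0 := by
    have h₁ := hv.lie_E_zero_lie_add_of_mem_loweringIdeal ha x y
    have h₂ := hv.lie_E_zero_lie_add_of_mem_loweringIdeal ha y x
    rw [← lie_skew, S.form_symm y x, map_neg, LinearMap.neg_apply, neg_lie] at h₂
    linear_combination (norm := module) h₁ + h₂
  exact (smul_eq_zero.1 hsum).resolve_left (mul_ne_zero two_ne_zero hxy)

lemma lie_E_zero_lie_of_mem_loweringIdeal [Nontrivial g] (hv : S.IsHighestWeightVector ψ v)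
    (ha : a ∈ S.loweringIdeal v) (x y : g) : ⁅S.E 0 ⁅x, y⁆ a, v⁆ = 0 := by
  simpa [hv.lie_K_of_mem_loweringIdeal ha] using hv.lie_E_zero_lie_add_of_mem_loweringIdeal ha x y

end IsHighestWeightVector

end LoweringIdeal

section Radical

variable {g A L V : Type*} [LieRing g] [LieAlgebra ℂ g] [CommRing A] [Algebra ℂ A]
  [LieRing L] [LieAlgebra ℂ L] (S : LoopAffVir g A L)
  [AddCommGroup V] [Module ℂ V] [LieRingModule L V] [LieModule ℂ L V]

/-- The current `a ↦ [x ⊗ tⁿ, y ⊗ t⁻ⁿ] ⊗ a`; for opposite root vectors `x`, `y` it is a multiple of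
the coroot of a real root. -/
def corootCurrent (n : ℤ) (x y : g) : A →ₗ[ℂ] L :=
  S.E 0 ⁅x, y⁆ + ((n : ℂ) * S.form x y) • S.K

variable {S} {α : Module.Dual ℂ S.H} {x y : g} {v : V} {a : A} {ψ : Module.Dual ℂ S.cartanA}

@[simp]
lemma lie_corootCurrent (n : ℤ) (x y : g) (a : A) (v : V) :
    ⁅S.corootCurrent n x y a, v⁆ = ⁅S.E 0 ⁅x, y⁆ a, v⁆ + ((n : ℂ) * S.form x y) • ⁅S.K a, v⁆ := by
  simp [corootCurrent]

lemma isCurrentSl2Triple_corootCurrent (hx : x ∈ S.rootSp α) (hy : y ∈ S.rootSp (-α)) (n : ℤ) :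
    IsCurrentSl2Triple (S.E n x) (S.E (-n) y) (S.corootCurrent n x y)
      (α ⟨⁅x, y⁆, lie_mem_cartan hx hy⟩) where
  lie_e_f a b := by simp [S.lie_EE, corootCurrent]
  lie_h_e a b := by
    simpa [S.K_central] using (isRootCurrent_E hx n).lie_E ⟨⁅x, y⁆, lie_mem_cartan hx hy⟩ a b
  lie_h_f a b := by
    simpa [S.K_central] using (isRootCurrent_E hy (-n)).lie_E ⟨⁅x, y⁆, lie_mem_cartan hx hy⟩ a b
  lie_f_f a b := by
    have hn : -n = n → n = 0 := by omega
    simpa [S.lie_EE] using fun h ↦ Or.inl (Or.inl (hn h))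

namespace IsHighestWeightVector

lemma exists_lie_corootCurrent_eq_smul (hv : S.IsHighestWeightVector ψ v) (hx : x ∈ S.rootSp α)
    (hy : y ∈ S.rootSp (-α)) (n : ℤ) (a : A) :
    ∃ p : ℂ, ⁅S.corootCurrent n x y a, v⁆ = p • v := by
  have hE := hv.lie_cartanA (S.eHA ⟨⁅x, y⁆, lie_mem_cartan hx hy⟩ a)
  have hK := hv.lie_cartanA (S.KA a)
  simp only [eHA, KA] at hE hK
  rw [lie_corootCurrent, hE, hK, smul_smul, ← add_smul]
  exact ⟨_, rfl⟩

theorem lie_corootCurrent_of_mem_radical [Nontrivial g] (hv : S.IsHighestWeightVector ψ v)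
    (hnil : S.RealRootsActNilpotentlyOn v) (hα : α ≠ 0) (hx : x ∈ S.rootSp α)
    (hy : y ∈ S.rootSp (-α)) {n : ℤ} (hxv : ∀ a, ⁅S.E n x a, v⁆ = 0)
    (ha : a ∈ (S.loweringIdeal v).radical) : ⁅S.corootCurrent n x y a, v⁆ = 0 := by
  have hle : S.loweringIdeal v ≤ lieAnnIdeal (S.corootCurrent n x y) v :=
    le_lieAnnIdeal_iff.2 fun b hb ↦ by
      simp [hv.lie_K_of_mem_loweringIdeal hb, hv.lie_E_zero_lie_of_mem_loweringIdeal hb]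
  have hrad : (lieAnnIdeal (S.corootCurrent n x y) v).IsRadical :=
    (isCurrentSl2Triple_corootCurrent hx hy n).isRadical_lieAnnIdeal hxv
      (hv.exists_lie_corootCurrent_eq_smul hx hy n) (hnil (-α) (neg_ne_zero.2 hα) y hy (-n))
  exact lie_eq_zero_of_mem_lieAnnIdeal (hrad.radical_le_iff.2 hle ha)

variable [FiniteDimensional ℂ g] [LieAlgebra.IsKilling ℂ g] [Nontrivial g]

theorem lie_E_zero_of_mem_radical (hv : S.IsHighestWeightVector ψ v)
    (hnil : S.RealRootsActNilpotentlyOn v) (ha : a ∈ (S.loweringIdeal v).radical) {h : g}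
    (hh : h ∈ S.H) : ⁅S.E 0 h a, v⁆ = 0 := by
  suffices hle : S.H.toSubmodule ≤ LinearMap.ker (orbitMap ((S.E 0).flip a) v) from hle hh
  refine S.cartan_le_span_lie_rootSp.trans (Submodule.span_le.2 ?_)
  rintro _ ⟨α, hα, x, hx, y, hy, rfl⟩
  simpa using hv.lie_corootCurrent_of_mem_radical hnil (S.Δplus_root α hα).1 hx hy
    (n := 0) (hv.lie_E_zero hα hx) ha

theorem lie_K_of_mem_radical (hv : S.IsHighestWeightVector ψ v)
    (hnil : S.RealRootsActNilpotentlyOn v) (ha : a ∈ (S.loweringIdeal v).radical) :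
    ⁅S.K a, v⁆ = 0 := by
  obtain ⟨α, hα⟩ := S.Δplus_nonempty
  obtain ⟨x, hx, hx0⟩ := Submodule.exists_mem_ne_zero_of_ne_bot (S.Δplus_root α hα).2
  obtain ⟨y, hy, hxy⟩ := exists_form_ne_zero_of_mem_rootSp hx hx0
  have hcoroot := hv.lie_corootCurrent_of_mem_radical hnil (S.Δplus_root α hα).1 hx hy
    (n := 1) (hv.lie_E_of_pos one_pos x) ha
  simpa [hv.lie_E_zero_of_mem_radical hnil ha (lie_mem_cartan hx hy), hxy] using hcoroot

end IsHighestWeightVector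

end Radical

end LoopAffVir

theorem statement3_general
    {g A L V : Type*} [LieRing g] [LieAlgebra ℂ g] [FiniteDimensional ℂ g]
    [LieAlgebra.IsKilling ℂ g] [Nontrivial g] [CommRing A] [Algebra ℂ A]
    [LieRing L] [LieAlgebra ℂ L] {S : LoopAffVir g A L}
    [AddCommGroup V] [Module ℂ V] [LieRingModule L V] [LieModule ℂ L V]
    {ψ : Module.Dual ℂ S.cartanA} {v : V} (hv : S.IsHighestWeightVector ψ v)
    (hV : S.HasFinDimWeightSpaces V) (hnil : S.RealRootsActNilpotentlyOn v) :
    ∃ I : Ideal A, IsCofiniteIdeal I ∧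
      (∀ a ∈ I, ψ (S.DA0 a) = 0 ∧ ψ (S.CA a) = 0) ∧
      (∀ a ∈ I.radical, ∀ h : S.H, ψ (S.eHA h a) = 0 ∧ ψ (S.KA a) = 0) := by
  refine ⟨S.loweringIdeal v, hv.isCofiniteIdeal_loweringIdeal hV, fun a ha ↦ ⟨?_, ?_⟩,
    fun a ha h ↦ ⟨?_, ?_⟩⟩ <;> rw [hv.apply_eq_zero_iff]
  · exact hv.lie_D_zero_of_mem_loweringIdeal ha
  · exact hv.lie_C_of_mem_loweringIdeal ha
  · exact hv.lie_E_zero_of_mem_radical hnil ha h.2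
  · exact hv.lie_K_of_mem_radical hnil ha

/-- If the irreducible highest weight module `V(ψ)` is integrable, then there
is a cofinite ideal `I` of `A` with `ψ(d₀ ⊗ I) = 0`, `ψ(C ⊗ I) = 0` and
`ψ((h̊ ⊕ ℂK) ⊗ √I) = 0`. -/
theorem statement3
    {g A L : Type*} [LieRing g] [LieAlgebra ℂ g] [FiniteDimensional ℂ g]
    [LieAlgebra.IsSimple ℂ g]
    [CommRing A] [Algebra ℂ A] [Algebra.FiniteType ℂ A]
    [LieRing L] [LieAlgebra ℂ L]
    (S : LoopAffVir g A L)
    (V : Type*) [AddCommGroup V] [Module ℂ V] [LieRingModule L V] [LieModule ℂ L V]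
    (ψ : Module.Dual ℂ S.cartanA)
    (hHW : S.IsHWModule V ψ)
    (hIrr : IsSimpleOrder (LieSubmodule ℂ L V))
    (hInt : S.IsIntegrable V)
    :
    ∃ I : Ideal A, IsCofiniteIdeal I ∧
      (∀ a ∈ I, ψ (S.DA0 a) = 0 ∧ ψ (S.CA a) = 0) ∧
      (∀ a ∈ I.radical, ∀ h : S.H, ψ (S.eHA h a) = 0 ∧ ψ (S.KA a) = 0) := by
  have := LieAlgebra.IsSimple.nontrivial ℂ g
  obtain ⟨v, hv0, hplus, hψ, -⟩ := hHW
  exact statement3_general ⟨hv0, hplus, hψ⟩ hInt.2.1 (hInt.realRootsActNilpotentlyOn v)
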